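/- For M > 0, λ ≥ 0, and any observed log-image g : Fin m × Fin n → ℝ, the penalized negative log-likelihood L(z) = M·∑_s (z_s + exp(g_s - z_s)) + λ·TV(z) possesses a unique global minimizer: there exists exactly one image ẑ : Fin m × Fin n → ℝ such that L(ẑ) ≤ L(z) for all z. -/

import Mathlib

open scoped BigOperators

/-- The total variation of an image `z : Fin m × Fin n → ℝ`, using first-order horizontal
and vertical differences with periodic (cyclic) boundary conditions. -/
noncomputable def TV {m n : ℕ} [NeZero m] [NeZero n] (z : Fin m × Fin n → ℝ) : ℝ :=
  ∑ s : Fin m × Fin n,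
    Real.sqrt ((z (s.1 + 1, s.2) - z s) ^ 2 + (z (s.1, s.2 + 1) - z s) ^ 2)

/-!
Each pixel contributes to the data term a strictly convex function of its own value that tends to
`+∞` at both ends of the line. A sum of such functions of separate coordinates is strictly convex
and coercive on the whole space of images, and adding a convex regularizer that is bounded below,
such as `lam * TV`, preserves both properties. Coercivity gives a minimizer and strict convexity
makes it unique.
-/

open Filter Set

lemma continuous_of_convexOn_univ {E : Type*} [NormedAddCommGroup E] [NormedSpace ℝ E]
    [FiniteDimensional ℝ E] {f : E → ℝ} (hf : ConvexOn ℝ univ f) : Continuous f :=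
  continuousOn_univ.mp (hf.continuousOn isOpen_univ)

lemma existsUnique_forall_le_of_strictConvexOn {E : Type*} [AddCommGroup E] [Module ℝ E]
    [TopologicalSpace E] {f : E → ℝ} (hcont : Continuous f) (hconv : StrictConvexOn ℝ univ f)
    (hlim : Tendsto f (cocompact E) atTop) : ∃! x, ∀ z, f x ≤ f z := by
  obtain ⟨x, hx⟩ := hcont.exists_forall_le hlim
  exact ⟨x, hx, fun y hy ↦ hconv.eq_of_isMinOn (fun z _ ↦ hy z) (fun z _ ↦ hx z)
    (mem_univ y) (mem_univ x)⟩

section SeparableSum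

variable {ι : Type*} [Fintype ι]

lemma strictConvexOn_sum_apply {𝕜 β : Type*} {E : ι → Type*} [Semiring 𝕜] [PartialOrder 𝕜]
    [∀ i, AddCommMonoid (E i)] [∀ i, Module 𝕜 (E i)] [AddCommMonoid β] [PartialOrder β]
    [IsOrderedCancelAddMonoid β] [Module 𝕜 β] {s : ∀ i, Set (E i)} {f : ∀ i, E i → β}
    (hf : ∀ i, StrictConvexOn 𝕜 (s i) (f i)) :
    StrictConvexOn 𝕜 (univ.pi s) fun z ↦ ∑ i, f i (z i) := by
  refine ⟨convex_pi fun i _ ↦ (hf i).1, fun x hx y hy hxy a b ha hb hab ↦ ?_⟩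
  obtain ⟨j, hj⟩ := Function.ne_iff.mp hxy
  simp only [Finset.smul_sum, ← Finset.sum_add_distrib]
  refine Finset.sum_lt_sum (fun i _ ↦ ?_) ⟨j, Finset.mem_univ j, ?_⟩
  · by_cases hi : x i = y i
    · simp [hi, ← add_smul, hab]
    · exact ((hf i).2 (hx i (mem_univ i)) (hy i (mem_univ i)) hi ha hb hab).le
  · exact (hf j).2 (hx j (mem_univ j)) (hy j (mem_univ j)) hj ha hb hab

lemma tendsto_sum_apply_coprodᵢ_atTop {β : Type*} {α : ι → Type*} [AddCommGroup β] [PartialOrder β]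
    [IsOrderedAddMonoid β] {l : ∀ i, Filter (α i)} {f : ∀ i, α i → β}
    (hbdd : ∀ i, BddBelow (range (f i))) (hlim : ∀ i, Tendsto (f i) (l i) atTop) :
    Tendsto (fun z ↦ ∑ i, f i (z i)) (Filter.coprodᵢ l) atTop := by
  classical
  choose c hc using hbdd
  have hcf (i : ι) (t : α i) : c i ≤ f i t := hc i (mem_range_self t)
  refine tendsto_iSup.mpr fun j ↦ ?_
  have hj : Tendsto (fun z : ∀ i, α i ↦ f j (z j)) (comap (Function.eval j) (l j)) atTop :=
    (hlim j).comp tendsto_comap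
  simp only [← Finset.add_sum_erase _ _ (Finset.mem_univ j)]
  exact tendsto_atTop_add_right_of_le _ (∑ i ∈ Finset.univ.erase j, c i) hj
    fun z ↦ Finset.sum_le_sum fun i _ ↦ hcf i (z i)

lemma existsUnique_forall_sum_apply_add_le {E : ι → Type*} [∀ i, NormedAddCommGroup (E i)]
    [∀ i, NormedSpace ℝ (E i)] [∀ i, FiniteDimensional ℝ (E i)] {f : ∀ i, E i → ℝ}
    (hf : ∀ i, StrictConvexOn ℝ univ (f i)) (hlim : ∀ i, Tendsto (f i) (cocompact (E i)) atTop)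
    {R : (∀ i, E i) → ℝ} (hR : ConvexOn ℝ univ R) (hR_bdd : BddBelow (range R)) :
    ∃! x, ∀ z, ∑ i, f i (x i) + R x ≤ ∑ i, f i (z i) + R z := by
  have hconv : StrictConvexOn ℝ univ fun z ↦ ∑ i, f i (z i) + R z :=
    (pi_univ univ ▸ strictConvexOn_sum_apply hf).add_convexOn hR
  have hf_bdd (i : ι) : BddBelow (range (f i)) := by
    obtain ⟨x, hx⟩ := (continuous_of_convexOn_univ (hf i).convexOn).exists_forall_le (hlim i)
    exact ⟨f i x, forall_mem_range.mpr hx⟩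
  obtain ⟨c, hc⟩ := hR_bdd
  have hcoercive : Tendsto (fun z ↦ ∑ i, f i (z i) + R z) (cocompact (∀ i, E i)) atTop := by
    rw [← coprodᵢ_cocompact]
    exact tendsto_atTop_add_right_of_le _ c (tendsto_sum_apply_coprodᵢ_atTop hf_bdd hlim)
      fun z ↦ hc (mem_range_self z)
  exact existsUnique_forall_le_of_strictConvexOn (continuous_of_convexOn_univ hconv.convexOn)
    hconv hcoercive

end SeparableSum

/-- The contribution of one pixel with observed log-intensity `g` to the negative log-likelihood of
the log-transformed `M`-look Gamma multiplicative noise model, up to a constant independent of the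
estimated log-intensity `t`. -/
noncomputable def gammaNegLogLikelihood (M g t : ℝ) : ℝ :=
  M * (t + Real.exp (g - t))

lemma strictConvexOn_gammaNegLogLikelihood {M : ℝ} (hM : 0 < M) (g : ℝ) :
    StrictConvexOn ℝ univ (gammaNegLogLikelihood M g) := by
  refine ⟨convex_univ, fun x _ y _ hxy a b ha hb hab ↦ ?_⟩
  have hexp : Real.exp (a * (g - x) + b * (g - y)) <
      a * Real.exp (g - x) + b * Real.exp (g - y) :=
    strictConvexOn_exp.2 (mem_univ _) (mem_univ _) (sub_right_injective.ne hxy) ha hb hab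
  have hcomb : g - (a * x + b * y) = a * (g - x) + b * (g - y) := by
    linear_combination (-g) * hab
  simp only [gammaNegLogLikelihood, smul_eq_mul, hcomb]
  linear_combination M * hexp

lemma abs_sub_add_le_add_exp_sub (g t : ℝ) : |t - g| + g ≤ t + Real.exp (g - t) := by
  rcases le_total g t with h | h
  · rw [abs_of_nonneg (sub_nonneg.mpr h)]
    linarith [Real.exp_pos (g - t)]
  · rw [abs_of_nonpos (sub_nonpos.mpr h)]
    have two_mul_le_exp : 2 * (g - t) ≤ Real.exp (g - t) := by
      nlinarith [Real.quadratic_le_exp_of_nonneg (sub_nonneg.mpr h), sq_nonneg (g - t - 1)]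
    linarith

lemma tendsto_gammaNegLogLikelihood_cocompact_atTop {M : ℝ} (hM : 0 < M) (g : ℝ) :
    Tendsto (gammaNegLogLikelihood M g) (cocompact ℝ) atTop := by
  have hdist : Tendsto (fun t ↦ |t - g|) (cocompact ℝ) atTop := tendsto_dist_right_cocompact_atTop g
  exact (tendsto_atTop_mono (abs_sub_add_le_add_exp_sub g)
    (tendsto_atTop_add_const_right _ g hdist)).const_mul_atTop hM

section TotalVariation

variable {m n : ℕ} [NeZero m] [NeZero n]

/-- The discrete gradient `(Δʰ z, Δᵛ z)` at the pixel `s`, with periodic boundary conditions (the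
additions in `Fin m` and `Fin n` are cyclic), as a linear map in the image `z`. Its values lie in
`EuclideanSpace` so that `TV` is a sum of norms. -/
noncomputable def periodicGradient (s : Fin m × Fin n) :
    (Fin m × Fin n → ℝ) →ₗ[ℝ] EuclideanSpace ℝ (Fin 2) where
  toFun z := !₂[z (s.1 + 1, s.2) - z s, z (s.1, s.2 + 1) - z s]
  map_add' z w := by ext i; fin_cases i <;> simp <;> ring
  map_smul' c z := by ext i; fin_cases i <;> simp <;> ring

lemma TV_eq_sum_norm_periodicGradient (z : Fin m × Fin n → ℝ) :
    TV z = ∑ s, ‖periodicGradient s z‖ := by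
  simp [TV, periodicGradient, EuclideanSpace.norm_eq]

lemma TV_nonneg (z : Fin m × Fin n → ℝ) : 0 ≤ TV z :=
  Finset.sum_nonneg fun _ _ ↦ Real.sqrt_nonneg _

lemma convexOn_TV : ConvexOn ℝ univ (TV : (Fin m × Fin n → ℝ) → ℝ) := by
  have hnorm (s : Fin m × Fin n) : ConvexOn ℝ univ fun z ↦ ‖periodicGradient s z‖ :=
    convexOn_univ_norm.comp_linearMap (periodicGradient s)
  refine ⟨convex_univ, fun x _ y _ a b ha hb hab ↦ ?_⟩
  simp only [TV_eq_sum_norm_periodicGradient, Finset.smul_sum, ← Finset.sum_add_distrib]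
  exact Finset.sum_le_sum fun s _ ↦ (hnorm s).2 (mem_univ x) (mem_univ y) ha hb hab

end TotalVariation

theorem existsUnique_minimizer_penalized_neg_log_likelihood_general {ι : Type*} [Fintype ι]
    {M : ℝ} (hM : 0 < M) (g : ι → ℝ) {R : (ι → ℝ) → ℝ} (hR : ConvexOn ℝ univ R)
    (hR_bdd : BddBelow (range R)) :
    ∃! zhat : ι → ℝ, ∀ z : ι → ℝ,
      M * ∑ s, (zhat s + Real.exp (g s - zhat s)) + R zhat ≤
      M * ∑ s, (z s + Real.exp (g s - z s)) + R z := by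
  simp only [Finset.mul_sum]
  exact existsUnique_forall_sum_apply_add_le
    (fun s ↦ strictConvexOn_gammaNegLogLikelihood hM (g s))
    (fun s ↦ tendsto_gammaNegLogLikelihood_cocompact_atTop hM (g s)) hR hR_bdd

/-- For `M > 0`, `λ ≥ 0` and any observed log-image `g`, the penalized negative
log-likelihood `L(z) = M • ∑ s, (z s + exp (g s - z s)) + λ • TV z` has a unique
global minimizer. -/
theorem existsUnique_minimizer_penalized_neg_log_likelihood {m n : ℕ} [NeZero m] [NeZero n]
    (M lam : ℝ) (hM : 0 < M) (hlam : 0 ≤ lam) (g : Fin m × Fin n → ℝ) :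
    ∃! zhat : Fin m × Fin n → ℝ, ∀ z : Fin m × Fin n → ℝ,
      M * ∑ s : Fin m × Fin n, (zhat s + Real.exp (g s - zhat s)) + lam * TV zhat ≤
      M * ∑ s : Fin m × Fin n, (z s + Real.exp (g s - z s)) + lam * TV z := by
  exact existsUnique_minimizer_penalized_neg_log_likelihood_general hM g
    (convexOn_TV.smul hlam) ⟨0, forall_mem_range.mpr fun z ↦ mul_nonneg hlam (TV_nonneg z)⟩
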